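/- arXiv:math/0507448 — 2 statements merged into one kernel-verified Lean document; each statement's English description precedes it below -/
import Mathlib

section
/- Fix an integer n ≥ 2. Let K be the set of families of nonnegative integers consisting of (k_{i,\bar{j}}) for 1 ≤ i < j ≤ n and (k_{i,r}) for 1 ≤ i ≤ r ≤ n, such that for each 1 ≤ i ≤ n−1: 0 ≤ k_{i,\overline{i+1}} ≤ k_{i,\overline{i+2}} ≤ … ≤ k_{i,\bar{n}}, 2·k_{i,\bar{n}} ≤ k_{i,n} ≤ 2·k_{i,n−1}, and k_{i,n−1} ≤ k_{i,n−2} ≤ … ≤ k_{i,i} (i.e. 0 ≤ k_{i,\overline{i+1}} ≤ … ≤ k_{i,\bar{n}} ≤ k_{i,n}/2 ≤ k_{i,n−1} ≤ … ≤ k_{i,i}), while k_{n,n} ≥ 0 is unconstrained. Let B be the set of families of nonnegative integers (b^i_j) where for 1 ≤ i ≤ n−1 the index j ranges over {i+1,…,n} ∪ {0} ∪ {\bar{n}, \overline{n−1}, …, \bar{i}}, and for i = n over {0, \bar{n}}, subject only to b^i_0 ∈ {0,1} for every i. Define Φ : K → B by: for 1 ≤ i ≤ n−1, Φ(k)^i_j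 = k_{i,j−1} − k_{i,j} for i+1 ≤ j ≤ n−1, Φ(k)^i_n = k_{i,n−1} − ⌈k_{i,n}/2⌉, Φ(k)^i_0 = k_{i,n} − 2⌊k_{i,n}/2⌋, Φ(k)^i_{\bar{n}} = ⌊k_{i,n}/2⌋ − k_{i,\bar{n}}, Φ(k)^i_{\bar{j}} = k_{i,\overline{j+1}} − k_{i,\bar{j}} for i+1 ≤ j ≤ n−1, Φ(k)^i_{\bar{i}} = k_{i,\overline{i+1}}; and Φ(k)^n_{\bar{n}} = ⌊k_{n,n}/2⌋, Φ(k)^n_0 = k_{n,n} − 2⌊k_{n,n}/2⌋. Define Ψ : B → K by: for 1 ≤ i ≤ n−1, Ψ(b)_{i,r} = Σ_{j=r+1}^{n} b^i_j + b^i_0 + Σ_{j=i}^{n} b^i_{\bar{j}} for i ≤ r ≤ n−1, Ψ(b)_{i,n} = 2·Σ_{j=i}^{n} b^i_{\bar{j}} + b^i_0, Ψ(b)_{i,\bar{r}} = Σ_{j=i}^{r−1} b^i_{\bar{j}} for i+1 ≤ r ≤ n; and Ψ(b)_{n,n} = 2·b^n_{\bar{n}} + b^n_0. Then Φ and Ψ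 are well defined and are mutually inverse bijections between K and B. -/
/-!
Both maps act row by row, and each row is a discrete integration / differentiation pair. The barred
counts are the successive differences of `0, k_{i,(i+1)̄}, …, k_{i,n̄}, ⌊k_{i,n}/2⌋`, so their partial
sums telescope back to the barred coordinates and their total is `⌊k_{i,n}/2⌋`
(`sum_PhiBbar`, `sum_PhiBbar_total`). The unbarred counts are the successive differences of
`k_{i,i}, …, k_{i,n-1}, ⌈k_{i,n}/2⌉`, so their tail sums telescope to `k_{i,r} - ⌈k_{i,n}/2⌉`
(`sum_PhiBb`). The two halves fit together because `⌊m/2⌋ + m % 2 = ⌈m/2⌉`: the letter `0` records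
the parity of `k_{i,n}`. Admissibility makes every truncated subtraction in `Φ` exact. Conversely, the
differences of the partial sums in `Ψ` are the counts themselves, and `b^i_0 ≤ 1` allows
`b^i_0` to be read off as the parity of `k_{i,n}`.
-/

/-!
Type `Bₙ` correspondence between Cliff's parametrization of `B(∞)` by
Kashiwara-embedding coordinates and the parametrization by marginally large
Kashiwara–Nakashima tableaux.

The family `k` consists of the unbarred entries `k i r  (1 ≤ i ≤ r ≤ n)` and the
barred entries `kb i j  (= k_{i, j̄}, 1 ≤ i < j ≤ n)`.  The family `b` consists of
the unbarred counts `b i j  (1 ≤ i ≤ n-1, i+1 ≤ j ≤ n)`, the counts `b0 i` of the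
letter `0` `(1 ≤ i ≤ n)`, and the barred counts `bb i j  (= b^i_{j̄}, i ≤ j ≤ n`,
with only `j = n` when `i = n`).  Values of the functions outside these index
ranges are irrelevant: all conditions and equalities are stated on the ranges.
-/

/-- Cliff's admissibility condition for type `Bₙ`: for `1 ≤ i ≤ n-1`,
`0 ≤ k_{i,(i+1)̄} ≤ ⋯ ≤ k_{i,n̄} ≤ k_{i,n}/2 ≤ k_{i,n-1} ≤ ⋯ ≤ k_{i,i}`
(`k_{i,n}/2` need not be an integer), while `k n n` is unconstrained. -/
def KconB (n : ℕ) (k kb : ℕ → ℕ → ℕ) : Prop :=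
  ∀ i, 1 ≤ i → i + 1 ≤ n →
    (∀ j, i + 1 ≤ j → j + 1 ≤ n → kb i j ≤ kb i (j + 1)) ∧
    2 * kb i n ≤ k i n ∧ k i n ≤ 2 * k i (n - 1) ∧
    (∀ r, i ≤ r → r + 2 ≤ n → k i (r + 1) ≤ k i r)

/-- Condition defining `B`: the letter `0` occurs at most once in each row. -/
def BconB (n : ℕ) (b0 : ℕ → ℕ) : Prop := ∀ i, 1 ≤ i → i ≤ n → b0 i ≤ 1

/-- Unbarred part of `Φ` (rows `1 ≤ i ≤ n-1`, letters `i+1 ≤ j ≤ n`):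
`Φ(k)^i_j = k_{i,j-1} - k_{i,j}` for `j ≤ n-1` and
`Φ(k)^i_n = k_{i,n-1} - ⌈k_{i,n}/2⌉`. -/
def PhiBb (n : ℕ) (k : ℕ → ℕ → ℕ) : ℕ → ℕ → ℕ := fun i j =>
  if j < n then k i (j - 1) - k i j else k i (n - 1) - (k i n + 1) / 2

/-- `0`-letter part of `Φ`: `Φ(k)^i_0 = k_{i,n} - 2⌊k_{i,n}/2⌋` (for `i = n`
this reads `k_{n,n} - 2⌊k_{n,n}/2⌋`). -/
def PhiB0 (n : ℕ) (k : ℕ → ℕ → ℕ) : ℕ → ℕ := fun i => k i n % 2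

/-- Barred part of `Φ` (letters `j̄`, `i ≤ j ≤ n`):
`Φ(k)^i_{ī} = k_{i,(i+1)̄}`, `Φ(k)^i_{j̄} = k_{i,(j+1)̄} - k_{i,j̄}` for
`i+1 ≤ j ≤ n-1`, `Φ(k)^i_{n̄} = ⌊k_{i,n}/2⌋ - k_{i,n̄}`; and
`Φ(k)^n_{n̄} = ⌊k_{n,n}/2⌋`. -/
def PhiBbar (n : ℕ) (k kb : ℕ → ℕ → ℕ) : ℕ → ℕ → ℕ := fun i j =>
  if i = n then k n n / 2
  else if j = i then kb i (i + 1)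
  else if j < n then kb i (j + 1) - kb i j
  else k i n / 2 - kb i n

/-- Unbarred part of `Ψ`: for `1 ≤ i ≤ n-1`,
`Ψ(b)_{i,r} = ∑_{j=r+1}^{n} b^i_j + b^i_0 + ∑_{j=i}^{n} b^i_{j̄}` for `i ≤ r ≤ n-1`
and `Ψ(b)_{i,n} = 2∑_{j=i}^{n} b^i_{j̄} + b^i_0`; also
`Ψ(b)_{n,n} = 2 b^n_{n̄} + b^n_0`. -/
def PsiBk (n : ℕ) (b : ℕ → ℕ → ℕ) (b0 : ℕ → ℕ) (bb : ℕ → ℕ → ℕ) : ℕ → ℕ → ℕ := fun i r =>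
  if r < n then (∑ j ∈ Finset.Icc (r + 1) n, b i j) + b0 i + ∑ j ∈ Finset.Icc i n, bb i j
  else 2 * (∑ j ∈ Finset.Icc i n, bb i j) + b0 i

/-- Barred part of `Ψ`: `Ψ(b)_{i,r̄} = ∑_{j=i}^{r-1} b^i_{j̄}` for `i+1 ≤ r ≤ n`. -/
def PsiBkb (n : ℕ) (bb : ℕ → ℕ → ℕ) : ℕ → ℕ → ℕ := fun i r =>
  ∑ j ∈ Finset.Icc i (r - 1), bb i j

theorem sum_Icc_last (f : ℕ → ℕ) {i j : ℕ} (hi : 1 ≤ i) (hij : i ≤ j) :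
    ∑ l ∈ Finset.Icc i j, f l = (∑ l ∈ Finset.Icc i (j - 1), f l) + f j := by
  obtain ⟨m, rfl⟩ : ∃ m, j = m + 1 := ⟨j - 1, by omega⟩
  exact Finset.sum_Icc_succ_top hij f

theorem sum_Icc_first (f : ℕ → ℕ) {j n : ℕ} (hjn : j ≤ n) :
    ∑ l ∈ Finset.Icc j n, f l = f j + ∑ l ∈ Finset.Icc (j + 1) n, f l := by
  rw [← Finset.insert_Icc_add_one_left_eq_Icc hjn, Finset.sum_insert (by simp)]

/-- The barred counts of `Φ(k)` up to the letter `(r-1)̄` telescope to `k_{i,r̄}`. -/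
theorem sum_PhiBbar {n : ℕ} {k kb : ℕ → ℕ → ℕ} (hk : KconB n k kb) {i r : ℕ}
    (hi : 1 ≤ i) (hir : i + 1 ≤ r) (hrn : r ≤ n) :
    ∑ j ∈ Finset.Icc i (r - 1), PhiBbar n k kb i j = kb i r := by
  induction r, hir using Nat.le_induction with
  | base =>
    have : i ≠ n := by omega
    simp [PhiBbar, this]
  | succ r hr ih =>
    have hmono := (hk i hi (by omega)).1 r hr hrn
    have h1 : i ≠ n := by omega
    have h2 : r ≠ i := by omega
    have h3 : r < n := by omega
    rw [Nat.add_sub_cancel, sum_Icc_last _ hi (by omega), ih (by omega)]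
    simp only [PhiBbar, h1, h2, h3, if_true, if_false]
    omega

/-- The barred counts of row `i` of `Φ(k)` add up to `⌊k_{i,n}/2⌋`, also for `i = n`. -/
theorem sum_PhiBbar_total {n : ℕ} {k kb : ℕ → ℕ → ℕ} (hk : KconB n k kb) {i : ℕ}
    (hi : 1 ≤ i) (hin : i ≤ n) :
    ∑ j ∈ Finset.Icc i n, PhiBbar n k kb i j = k i n / 2 := by
  rcases Nat.eq_or_lt_of_le hin with rfl | hlt
  · simp [PhiBbar]
  · have hle := (hk i hi hlt).2.1
    have h1 : i ≠ n := by omega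
    have h2 : n ≠ i := by omega
    rw [sum_Icc_last _ hi hin, sum_PhiBbar hk hi hlt le_rfl]
    simp only [PhiBbar, h1, h2, lt_irrefl, if_false]
    omega

/-- The unbarred counts of `Φ(k)` for the letters `r+1, …, n` telescope to
`k_{i,r} - ⌈k_{i,n}/2⌉`. -/
theorem sum_PhiBb {n : ℕ} {k kb : ℕ → ℕ → ℕ} (hk : KconB n k kb) {i r : ℕ}
    (hi : 1 ≤ i) (hir : i ≤ r) (hrn : r + 1 ≤ n) :
    (∑ j ∈ Finset.Icc (r + 1) n, PhiBb n k i j) + (k i n + 1) / 2 = k i r := by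
  obtain ⟨-, -, hhalf, hmono⟩ := hk i hi (by omega)
  obtain ⟨d, hd⟩ : ∃ d, n = r + 1 + d := ⟨n - (r + 1), by omega⟩
  induction d generalizing r with
  | zero =>
    obtain rfl : n = r + 1 := by omega
    simp only [Finset.Icc_self, Finset.sum_singleton, PhiBb, lt_irrefl, if_false,
      Nat.add_sub_cancel] at hhalf ⊢
    omega
  | succ d ih =>
    have htail := ih (r := r + 1) (by omega) (by omega) (by omega)
    have hstep := hmono r hir (by omega)
    have hlt : r + 1 < n := by omega
    rw [sum_Icc_first _ hrn]
    simp only [PhiBb, hlt, if_true, Nat.add_sub_cancel] at htail ⊢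
    omega

/-- The values of `Ψ` satisfy the chain of inequalities defining `K`. -/
theorem KconB_Psi {n : ℕ} (b : ℕ → ℕ → ℕ) (b0 : ℕ → ℕ) (bb : ℕ → ℕ → ℕ) :
    KconB n (PsiBk n b b0 bb) (PsiBkb n bb) := by
  intro i hi hin
  have hlast := sum_Icc_last (bb i) hi (show i ≤ n by omega)
  have hlt : n - 1 < n := by omega
  refine ⟨fun j hj hjn => ?_, ?_, ?_, fun r hr hrn => ?_⟩
  · have := sum_Icc_last (bb i) hi (show i ≤ j by omega)
    simp only [PsiBkb, Nat.add_sub_cancel]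
    omega
  · simp only [PsiBk, PsiBkb, lt_irrefl, if_false]
    omega
  · simp only [PsiBk, lt_irrefl, hlt, if_false, if_true]
    omega
  · have := sum_Icc_first (b i) (show r + 1 ≤ n by omega)
    have h1 : r + 1 < n := by omega
    have h2 : r < n := by omega
    simp only [PsiBk, h1, h2, if_true]
    omega

/-- type `Bₙ`.  `Φ` and `Ψ` are well defined (their values
satisfy the defining constraints of `B` and `K` respectively) and are mutually
inverse bijections between `K` and `B`, families being compared on their
defining index ranges. -/
theorem typeB_tableau_Cliff_bijection (n : ℕ) (hn : 2 ≤ n) :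
    -- Φ is well defined: the image satisfies the constraint of B
    (∀ k kb : ℕ → ℕ → ℕ, KconB n k kb → ∀ i, 1 ≤ i → i ≤ n → PhiB0 n k i ≤ 1) ∧
    -- Ψ is well defined: the image satisfies the constraint of K
    (∀ (b : ℕ → ℕ → ℕ) (b0 : ℕ → ℕ) (bb : ℕ → ℕ → ℕ), BconB n b0 →
      KconB n (PsiBk n b b0 bb) (PsiBkb n bb)) ∧
    -- Ψ ∘ Φ is the identity on K
    (∀ k kb : ℕ → ℕ → ℕ, KconB n k kb →
      (∀ i r, 1 ≤ i → i ≤ r → r ≤ n →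
        PsiBk n (PhiBb n k) (PhiB0 n k) (PhiBbar n k kb) i r = k i r) ∧
      (∀ i j, 1 ≤ i → i < j → j ≤ n →
        PsiBkb n (PhiBbar n k kb) i j = kb i j)) ∧
    -- Φ ∘ Ψ is the identity on B
    (∀ (b : ℕ → ℕ → ℕ) (b0 : ℕ → ℕ) (bb : ℕ → ℕ → ℕ), BconB n b0 →
      (∀ i j, 1 ≤ i → i + 1 ≤ n → i < j → j ≤ n →
        PhiBb n (PsiBk n b b0 bb) i j = b i j) ∧
      (∀ i, 1 ≤ i → i ≤ n → PhiB0 n (PsiBk n b b0 bb) i = b0 i) ∧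
      (∀ i j, 1 ≤ i → i ≤ j → j ≤ n →
        PhiBbar n (PsiBk n b b0 bb) (PsiBkb n bb) i j = bb i j)) := by
  refine ⟨fun k kb _ i _ _ => ?_, fun b b0 bb _ => KconB_Psi b b0 bb,
    fun k kb hk => ⟨fun i r hi hir hrn => ?_, fun i j hi hij hjn => sum_PhiBbar hk hi hij hjn⟩,
    fun b b0 bb hb => ⟨fun i j hi hin hij hjn => ?_, fun i hi hin => ?_,
      fun i j hi hij hjn => ?_⟩⟩
  · simp only [PhiB0]
    omega
  · have htot := sum_PhiBbar_total hk hi (hir.trans hrn)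
    rcases Nat.eq_or_lt_of_le hrn with rfl | hlt
    · simp only [PsiBk, PhiB0, lt_irrefl, if_false, htot]
      omega
    · have htail := sum_PhiBb hk hi hir hlt
      simp only [PsiBk, PhiB0, hlt, if_true, htot]
      omega
  · have hb0 := hb i hi (by omega)
    have hfirst := sum_Icc_first (b i) hjn
    have hpred : j - 1 + 1 = j := by omega
    have hlt : j - 1 < n := by omega
    rcases Nat.eq_or_lt_of_le hjn with rfl | hjlt
    · simp only [Finset.Icc_self, Finset.sum_singleton, PhiBb, PsiBk, lt_irrefl, hlt, hpred,
        if_true, if_false]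
      omega
    · simp only [PhiBb, PsiBk, hjlt, hlt, hpred, if_true]
      omega
  · have hb0 := hb i hi hin
    simp only [PhiB0, PsiBk, lt_irrefl, if_false]
    omega
  · have hb0 := hb i hi (hij.trans hjn)
    rcases Nat.eq_or_lt_of_le (hij.trans hjn) with rfl | hin
    · obtain rfl : j = i := by omega
      simp only [PhiBbar, PsiBk, lt_irrefl, if_true, if_false, Finset.Icc_self,
        Finset.sum_singleton]
      omega
    · have h1 : i ≠ n := by omega
      have hlast := sum_Icc_last (bb i) hi hij
      rcases Nat.eq_or_lt_of_le hij with rfl | hlt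
      · simp [PhiBbar, PsiBkb, h1]
      · have h2 : j ≠ i := by omega
        rcases Nat.eq_or_lt_of_le hjn with rfl | hjlt
        · simp only [PhiBbar, PsiBk, PsiBkb, h1, h2, lt_irrefl, if_false]
          omega
        · simp only [PhiBbar, PsiBkb, h1, h2, hjlt, if_true, if_false, Nat.add_sub_cancel]
          omega
end

section
/- Fix an integer n ≥ 2. Let K be the set of families of nonnegative integers consisting of (k_{i,\bar{j}}) for 1 ≤ i < j ≤ n, (k_{i,r}) for 1 ≤ i ≤ r ≤ n, and (k_{i,n+1}) for 1 ≤ i ≤ n, such that for each 1 ≤ i ≤ n−1: 0 ≤ k_{i,\overline{i+1}} ≤ k_{i,\overline{i+2}} ≤ … ≤ k_{i,\bar{n}} ≤ min(k_{i,n}, k_{i,n+1}) and max(k_{i,n}, k_{i,n+1}) ≤ k_{i,n−1} ≤ k_{i,n−2} ≤ … ≤ k_{i,i}, while k_{n,n} ≥ 0 and k_{n,n+1} ≥ 0 are unconstrained. Let B be the set of families of nonnegative integers (b^i_j) where for 1 ≤ i ≤ n−1 the index j ranges over {i+1,…,n} ∪ {n+1, \overline{n+1}} ∪ {\bar{n},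 \overline{n−1}, …, \bar{i}}, and for i = n over {n+1, \overline{n+1}, \bar{n}}, subject only to the condition that for each 1 ≤ i ≤ n at least one of b^i_{n+1} and b^i_{\overline{n+1}} equals 0. Define Φ : K → B by: for 1 ≤ i ≤ n−1, Φ(k)^i_j = k_{i,j−1} − k_{i,j} for i+1 ≤ j ≤ n−1, Φ(k)^i_n = k_{i,n−1} − max(k_{i,n}, k_{i,n+1}), Φ(k)^i_{n+1} = max(0, k_{i,n} − k_{i,n+1}), Φ(k)^i_{\overline{n+1}} = max(0, k_{i,n+1} − k_{i,n}), Φ(k)^i_{\bar{n}} = min(k_{i,n}, k_{i,n+1}) − k_{i,\bar{n}}, Φ(k)^i_{\bar{j}} = k_{i,\overline{j+1}} − k_{i,\bar{j}} for i+1 ≤ j ≤ n−1, Φ(k)^i_{\bar{i}} = k_{i,\overline{i+1}}; and Φ(k)^n_{n+1} = max(0, k_{n,n} − k_{n,n+1}), Φ(k)^n_{\overline{n+1}} = max(0, k_{n,n+1} − k_{n,n}), Φ(k)^n_{\bar{n}} = min(k_{n,n}, k_{n,n+1}). Define Ψ : B → K by: for 1 ≤ i ≤ n−1, Ψ(b)_{i,r}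 = Σ_{j=r+1}^{n+1} b^i_j + Σ_{j=i}^{n+1} b^i_{\bar{j}} for i ≤ r ≤ n−1, Ψ(b)_{i,n} = b^i_{n+1} + Σ_{j=i}^{n} b^i_{\bar{j}}, Ψ(b)_{i,n+1} = Σ_{j=i}^{n+1} b^i_{\bar{j}}, Ψ(b)_{i,\bar{r}} = Σ_{j=i}^{r−1} b^i_{\bar{j}} for i+1 ≤ r ≤ n; and Ψ(b)_{n,n} = b^n_{n+1} + b^n_{\bar{n}}, Ψ(b)_{n,n+1} = b^n_{\bar{n}} + b^n_{\overline{n+1}}. Then Φ and Ψ are well defined and are mutually inverse bijections between K and B. -/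
/-!
Everything happens one row `i` at a time. Along a row with `i < n`, `Φ` takes successive
differences of Cliff's chain
`0 ≤ k_{i,(i+1)bar} ≤ ⋯ ≤ k_{i,n̄} ≤ min ≤ max ≤ k_{i,n-1} ≤ ⋯ ≤ k_{i,i}`,
where `min` and `max` are those of `k_{i,n}` and `k_{i,n+1}`, and `Ψ` takes partial sums.
The gap `max - min` is recorded in the letter `n+1` or in `(n+1)bar`, according to
the sign of `k_{i,n} - k_{i,n+1}`; the other letter then has count zero, and this is exactly
what is needed to recover `k_{i,n}` and `k_{i,n+1}` separately.

So `Ψ ∘ Φ = id` amounts to telescoping sums, for which the chain of inequalities ensures that no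
subtraction in `ℕ` truncates (`sum_PhiDbar_lt`, `sum_PhiDbar_n`, `sum_PhiDbar_succ`,
`sum_PhiDb_add`). Conversely `Φ ∘ Ψ = id` follows by splitting one term off a sum, as differences
of consecutive partial sums are the summands. Row `n` has only the two values `k_{n,n}`, `k_{n,n+1}`
and needs no telescoping.
-/

/-!
Type `D_{n+1}` correspondence between Cliff's parametrization of `B(∞)` by
Kashiwara-embedding coordinates and the parametrization by marginally large
Kashiwara–Nakashima tableaux.

The family `k` consists of the unbarred entries `k i r  (1 ≤ i ≤ r ≤ n)`
together with `k i (n+1)  (1 ≤ i ≤ n)`, and the barred entries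
`kb i j  (= k_{i, j̄}, 1 ≤ i < j ≤ n)`.  The family `b` consists of the unbarred
counts `b i j` (letters `i+1 ≤ j ≤ n+1`; only `j = n+1` when `i = n`) and the
barred counts `bb i j  (= b^i_{j̄}`, letters `i ≤ j ≤ n+1`; only
`j ∈ {n, n+1}` when `i = n`).  Note that in `ℕ`, `a - b = max (0, a - b)`.
Values of the functions outside these index ranges are irrelevant: all
conditions and equalities are stated on the ranges. -/

/-- Cliff's admissibility condition for type `D_{n+1}`: for `1 ≤ i ≤ n-1`,
`0 ≤ k_{i,(i+1)̄} ≤ ⋯ ≤ k_{i,n̄} ≤ min(k_{i,n}, k_{i,n+1})` and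
`max(k_{i,n}, k_{i,n+1}) ≤ k_{i,n-1} ≤ ⋯ ≤ k_{i,i}`, while `k n n` and
`k n (n+1)` are unconstrained. -/
def KconD (n : ℕ) (k kb : ℕ → ℕ → ℕ) : Prop :=
  ∀ i, 1 ≤ i → i + 1 ≤ n →
    (∀ j, i + 1 ≤ j → j + 1 ≤ n → kb i j ≤ kb i (j + 1)) ∧
    kb i n ≤ min (k i n) (k i (n + 1)) ∧
    max (k i n) (k i (n + 1)) ≤ k i (n - 1) ∧
    (∀ r, i ≤ r → r + 2 ≤ n → k i (r + 1) ≤ k i r)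

/-- Condition defining `B`: for each row `1 ≤ i ≤ n`, at least one of
`b^i_{n+1}` and `b^i_{(n+1)bar}` equals `0` (the letters `n+1` and `(n+1)bar`
never occur in the same row). -/
def BconD (n : ℕ) (b bb : ℕ → ℕ → ℕ) : Prop :=
  ∀ i, 1 ≤ i → i ≤ n → b i (n + 1) = 0 ∨ bb i (n + 1) = 0

/-- Unbarred part of `Φ` (letters `i+1 ≤ j ≤ n+1`):
`Φ(k)^i_j = k_{i,j-1} - k_{i,j}` for `i+1 ≤ j ≤ n-1`,
`Φ(k)^i_n = k_{i,n-1} - max(k_{i,n}, k_{i,n+1})`, and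
`Φ(k)^i_{n+1} = max(0, k_{i,n} - k_{i,n+1})` (also for `i = n`). -/
def PhiDb (n : ℕ) (k : ℕ → ℕ → ℕ) : ℕ → ℕ → ℕ := fun i j =>
  if j < n then k i (j - 1) - k i j
  else if j = n then k i (n - 1) - max (k i n) (k i (n + 1))
  else k i n - k i (n + 1)

/-- Barred part of `Φ` (letters `j̄`, `i ≤ j ≤ n+1`):
`Φ(k)^i_{(n+1)bar} = max(0, k_{i,n+1} - k_{i,n})` (also for `i = n`),
`Φ(k)^i_{n̄} = min(k_{i,n}, k_{i,n+1}) - k_{i,n̄}` for `i ≤ n-1`,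
`Φ(k)^n_{n̄} = min(k_{n,n}, k_{n,n+1})`,
`Φ(k)^i_{j̄} = k_{i,(j+1)̄} - k_{i,j̄}` for `i+1 ≤ j ≤ n-1`, and
`Φ(k)^i_{ī} = k_{i,(i+1)̄}`. -/
def PhiDbar (n : ℕ) (k kb : ℕ → ℕ → ℕ) : ℕ → ℕ → ℕ := fun i j =>
  if j = n + 1 then k i (n + 1) - k i n
  else if i = n then min (k n n) (k n (n + 1))
  else if j = i then kb i (i + 1)
  else if j < n then kb i (j + 1) - kb i j
  else min (k i n) (k i (n + 1)) - kb i n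

/-- Unbarred part of `Ψ`:
`Ψ(b)_{i,r} = ∑_{j=r+1}^{n+1} b^i_j + ∑_{j=i}^{n+1} b^i_{j̄}` for `i ≤ r ≤ n-1`,
`Ψ(b)_{i,n} = b^i_{n+1} + ∑_{j=i}^{n} b^i_{j̄}`, and
`Ψ(b)_{i,n+1} = ∑_{j=i}^{n+1} b^i_{j̄}` (at `i = n` these read
`Ψ(b)_{n,n} = b^n_{n+1} + b^n_{n̄}` and `Ψ(b)_{n,n+1} = b^n_{n̄} + b^n_{(n+1)bar}`). -/
def PsiDk (n : ℕ) (b bb : ℕ → ℕ → ℕ) : ℕ → ℕ → ℕ := fun i r =>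
  if r < n then (∑ j ∈ Finset.Icc (r + 1) (n + 1), b i j) + ∑ j ∈ Finset.Icc i (n + 1), bb i j
  else if r = n then b i (n + 1) + ∑ j ∈ Finset.Icc i n, bb i j
  else ∑ j ∈ Finset.Icc i (n + 1), bb i j

/-- Barred part of `Ψ`: `Ψ(b)_{i,r̄} = ∑_{j=i}^{r-1} b^i_{j̄}` for `i+1 ≤ r ≤ n`. -/
def PsiDkb (n : ℕ) (bb : ℕ → ℕ → ℕ) : ℕ → ℕ → ℕ := fun i r =>
  ∑ j ∈ Finset.Icc i (r - 1), bb i j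

theorem sum_Icc_split_last (f : ℕ → ℕ) {a m : ℕ} (h : a ≤ m + 1) :
    ∑ j ∈ Finset.Icc a (m + 1), f j = (∑ j ∈ Finset.Icc a m, f j) + f (m + 1) :=
  Finset.sum_Icc_succ_top h f

theorem sum_Icc_split_first (f : ℕ → ℕ) {a m : ℕ} (h : a ≤ m) :
    ∑ j ∈ Finset.Icc a m, f j = f a + ∑ j ∈ Finset.Icc (a + 1) m, f j := by
  rw [← Finset.insert_Icc_add_one_left_eq_Icc h, Finset.sum_insert (by simp)]

/-- The barred counts of `Φ(k)` up to the letter `m̄` telescope to `k_{i,(m+1)bar}`. -/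
theorem sum_PhiDbar_lt {n : ℕ} {k kb : ℕ → ℕ → ℕ} (hK : KconD n k kb) {i : ℕ} (hi : 1 ≤ i)
    {m : ℕ} (him : i ≤ m) (hm : m < n) :
    ∑ j ∈ Finset.Icc i m, PhiDbar n k kb i j = kb i (m + 1) := by
  induction m, him using Nat.le_induction with
  | base =>
    rw [Finset.Icc_self, Finset.sum_singleton]
    simp [PhiDbar, hm.ne, (show i ≠ n + 1 by omega)]
  | succ m him ih =>
    have hmono := (hK i hi (by omega)).1 (m + 1) (by omega) (by omega)
    rw [sum_Icc_split_last _ (by omega), ih (by omega)]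
    simp only [PhiDbar]
    rw [if_neg (by omega), if_neg (by omega), if_neg (by omega), if_pos hm]
    omega

theorem sum_PhiDbar_n {n : ℕ} {k kb : ℕ → ℕ → ℕ} (hK : KconD n k kb) {i : ℕ} (hi : 1 ≤ i)
    (hin : i ≤ n) :
    ∑ j ∈ Finset.Icc i n, PhiDbar n k kb i j = min (k i n) (k i (n + 1)) := by
  rcases hin.eq_or_lt with rfl | hlt
  · simp [PhiDbar]
  · obtain ⟨m, rfl⟩ : ∃ m, n = m + 1 := ⟨n - 1, by omega⟩
    have hle := (hK i hi hlt).2.1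
    rw [sum_Icc_split_last _ hin, sum_PhiDbar_lt hK hi (by omega) (by omega)]
    simp only [PhiDbar]
    rw [if_neg (by omega), if_neg (by omega), if_neg (by omega), if_neg (by omega)]
    omega

theorem sum_PhiDbar_succ {n : ℕ} {k kb : ℕ → ℕ → ℕ} (hK : KconD n k kb) {i : ℕ} (hi : 1 ≤ i)
    (hin : i ≤ n) :
    ∑ j ∈ Finset.Icc i (n + 1), PhiDbar n k kb i j = k i (n + 1) := by
  rw [sum_Icc_split_last _ (by omega), sum_PhiDbar_n hK hi hin]
  simp only [PhiDbar, if_true]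
  omega

/-- The unbarred counts of `Φ(k)` above the letter `r` telescope to `k_{i,r} - k_{i,n+1}`,
stated additively to avoid subtraction. -/
theorem sum_PhiDb_add {n : ℕ} {k kb : ℕ → ℕ → ℕ} (hK : KconD n k kb) {i : ℕ} (hi : 1 ≤ i)
    {r : ℕ} (hir : i ≤ r) (hr : r + 1 ≤ n) :
    (∑ j ∈ Finset.Icc (r + 1) (n + 1), PhiDb n k i j) + k i (n + 1) = k i r := by
  obtain ⟨-, -, hmax, hanti⟩ := hK i hi (by omega)
  rw [sum_Icc_split_first _ (by omega)]
  rcases hr.eq_or_lt with rfl | hlt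
  · simp [PhiDb] at hmax ⊢
    omega
  · have ih := sum_PhiDb_add hK hi (r := r + 1) (by omega) hlt
    have hstep := hanti r hir hlt
    have hval : PhiDb n k i (r + 1) = k i r - k i (r + 1) := by simp [PhiDb, hlt]
    omega
termination_by n - r

/-- type `D_{n+1}`.  `Φ` and `Ψ` are well defined (their
values satisfy the defining constraints of `B` and `K` respectively) and are
mutually inverse bijections between `K` and `B`, families being compared on
their defining index ranges. -/
theorem typeD_tableau_Cliff_bijection (n : ℕ) (hn : 2 ≤ n) :
    -- Φ is well defined: the image satisfies the constraint of B
    (∀ k kb : ℕ → ℕ → ℕ, KconD n k kb → BconD n (PhiDb n k) (PhiDbar n k kb)) ∧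
    -- Ψ is well defined: the image satisfies the constraint of K
    (∀ b bb : ℕ → ℕ → ℕ, BconD n b bb → KconD n (PsiDk n b bb) (PsiDkb n bb)) ∧
    -- Ψ ∘ Φ is the identity on K
    (∀ k kb : ℕ → ℕ → ℕ, KconD n k kb →
      (∀ i r, 1 ≤ i → i ≤ n → i ≤ r → r ≤ n + 1 →
        PsiDk n (PhiDb n k) (PhiDbar n k kb) i r = k i r) ∧
      (∀ i j, 1 ≤ i → i < j → j ≤ n →
        PsiDkb n (PhiDbar n k kb) i j = kb i j)) ∧
    -- Φ ∘ Ψ is the identity on B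
    (∀ b bb : ℕ → ℕ → ℕ, BconD n b bb →
      (∀ i j, 1 ≤ i → i ≤ n → i < j → j ≤ n + 1 →
        PhiDb n (PsiDk n b bb) i j = b i j) ∧
      (∀ i j, 1 ≤ i → i ≤ n → i ≤ j → j ≤ n + 1 →
        PhiDbar n (PsiDk n b bb) (PsiDkb n bb) i j = bb i j)) := by
  refine ⟨?_, ?_, ?_, ?_⟩
  · intro k kb _ i _ _
    simp only [PhiDb, PhiDbar]
    rw [if_neg (by omega), if_neg (by omega), if_pos trivial]
    omega
  · intro b bb hB i hi hin
    have hzero := hB i hi (by omega)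
    obtain ⟨m, rfl⟩ : ∃ m, n = m + 1 := ⟨n - 1, by omega⟩
    have hm := sum_Icc_split_last (bb i) (a := i) (m := m) (by omega)
    have hm' := sum_Icc_split_last (bb i) (a := i) (m := m + 1) (by omega)
    refine ⟨?_, ?_, ?_, ?_⟩
    · intro j hj _
      simp only [PsiDkb]
      exact Finset.sum_le_sum_of_subset (Finset.Icc_subset_Icc_right (by omega))
    · simp [PsiDk, PsiDkb]
      omega
    · have hb := sum_Icc_split_first (b i) (a := m + 1) (m := m + 1 + 1) (by omega)
      have hb' : ∑ j ∈ Finset.Icc (m + 1 + 1) (m + 1 + 1), b i j = b i (m + 1 + 1) := by simp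
      simp only [PsiDk, Nat.add_sub_cancel]
      rw [if_neg (by omega), if_pos trivial, if_neg (by omega), if_neg (by omega), if_pos (by omega)]
      omega
    · intro r _ hr
      simp only [PsiDk]
      rw [if_pos (by omega), if_pos (by omega)]
      gcongr
      omega
  · intro k kb hK
    refine ⟨?_, ?_⟩
    · intro i r hi hin hir hr
      simp only [PsiDk]
      rw [sum_PhiDbar_succ hK hi hin, sum_PhiDbar_n hK hi hin]
      split_ifs with h1 h2
      · exact sum_PhiDb_add hK hi hir h1
      · subst h2
        simp [PhiDb]
      · rw [show r = n + 1 by omega]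
    · intro i j hi hij hj
      simp only [PsiDkb]
      rw [sum_PhiDbar_lt hK hi (by omega) (by omega), Nat.sub_add_cancel (by omega)]
  · intro b bb hB
    refine ⟨?_, ?_⟩
    · intro i j hi hin hij hj
      have hzero := hB i hi hin
      have hlast := sum_Icc_split_last (bb i) (a := i) (m := n) (by omega)
      simp only [PhiDb]
      split_ifs with h1 h2
      · have hb := sum_Icc_split_first (b i) (a := j) (m := n + 1) hj
        simp only [PsiDk]
        rw [if_pos (by omega), if_pos h1, Nat.sub_add_cancel (by omega)]
        omega
      · subst h2
        have hb := sum_Icc_split_first (b i) (a := j) (m := j + 1) (by omega)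
        have hb' : ∑ l ∈ Finset.Icc (j + 1) (j + 1), b i l = b i (j + 1) := by simp
        simp only [PsiDk]
        rw [if_pos (by omega), if_neg (by omega), if_pos trivial, if_neg (by omega),
          if_neg (by omega), Nat.sub_add_cancel (by omega)]
        omega
      · obtain rfl : j = n + 1 := by omega
        simp [PsiDk]
        omega
    · intro i j hi hin hij hj
      have hzero := hB i hi hin
      have hlast := sum_Icc_split_last (bb i) (a := i) (m := n) (by omega)
      have hkn : PsiDk n b bb i n = b i (n + 1) + ∑ l ∈ Finset.Icc i n, bb i l := by
        simp [PsiDk]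
      have hkn' : PsiDk n b bb i (n + 1) = ∑ l ∈ Finset.Icc i (n + 1), bb i l := by
        simp [PsiDk]
      simp only [PhiDbar]
      split_ifs with h1 h2 h3 h4
      · subst h1
        omega
      · subst h2
        obtain rfl : j = i := by omega
        rw [Finset.Icc_self, Finset.sum_singleton] at hkn hlast
        omega
      · subst h3
        simp [PsiDkb]
      · obtain ⟨m, rfl⟩ : ∃ m, j = m + 1 := ⟨j - 1, by omega⟩
        have hs := sum_Icc_split_last (bb i) (a := i) (m := m) hij
        simp only [PsiDkb, Nat.add_sub_cancel]
        omega
      · obtain rfl : j = n := by omega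
        obtain ⟨m, rfl⟩ : ∃ m, j = m + 1 := ⟨j - 1, by omega⟩
        have hs := sum_Icc_split_last (bb i) (a := i) (m := m) hij
        simp only [PsiDkb, Nat.add_sub_cancel]
        omega
end
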